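/- Let G be a finite connected simple graph with edge weights w : E(G) → ℕ, let R ⊆ V(G) be a set of terminals, let T be a Steiner tree for R in G, and let t ≥ 2 be an integer. Then there exists a t-restricted Steiner tree 𝒯 for R whose cost, i.e., the sum over all t-components in 𝒯 of their weights, is at most (1 + 1/⌊log₂ t⌋)·w(T). -/

import Mathlib

open SimpleGraph Set

variable {V : Type*}

/-- The connected component of `x` inside the induced subgraph `G[S]`, as a subset of `V`. -/
def compIn (G : SimpleGraph V) (S : Set V) (x : V) : Set V :=
  {y | ∃ (hx : x ∈ S) (hy : y ∈ S), (G.induce S).Reachable ⟨x, hx⟩ ⟨y, hy⟩}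

/-- `tdLE G n S` means that the treedepth of the induced subgraph `G[S]` is at most `n`,
following the recursive definition of treedepth: a graph has treedepth at most `n+1`
iff from every connected component one can delete a vertex leaving a graph of
treedepth at most `n`; only the empty graph has treedepth at most `0`. -/
def tdLE (G : SimpleGraph V) : ℕ → Set V → Prop
  | 0, S => S = ∅
  | n+1, S => ∀ x ∈ S, ∃ v ∈ compIn G S x, tdLE G n (compIn G S x \ {v})

/-- The treedepth of the induced subgraph `G[S]`. -/
noncomputable def td (G : SimpleGraph V) (S : Set V) : ℕ :=
  sInf {n | tdLE G n S}

/-- `N_G(C)`: the set of vertices outside `C` having a neighbor in `C`. -/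
def nbhd (G : SimpleGraph V) (C : Set V) : Set V :=
  {v | v ∉ C ∧ ∃ u ∈ C, G.Adj u v}

/-- `C` is a connected component of the induced subgraph `G[R]`. -/
def IsCompOf (G : SimpleGraph V) (R C : Set V) : Prop :=
  ∃ x ∈ R, C = compIn G R x

/-- `S` is an `η`-treedepth deletion set of `G`: `td(G − S) ≤ η`. -/
def IsTDS (G : SimpleGraph V) (η : ℕ) (S : Set V) : Prop :=
  td G Sᶜ ≤ η

/-- `S` is a connected `η`-treedepth deletion set of `G`. -/
def IsCTDS (G : SimpleGraph V) (η : ℕ) (S : Set V) : Prop :=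
  IsTDS G η S ∧ S.Nonempty ∧ (G.induce S).Connected

/-- A rooted forest with vertex set `A ⊆ V`, given by its (reflexive) ancestor relation:
`anc u v` means `u` is an ancestor of `v` (every vertex being an ancestor of itself). -/
structure RootedForest (V : Type*) (A : Set V) where
  anc : V → V → Prop
  mem_left : ∀ {u v}, anc u v → u ∈ A
  mem_right : ∀ {u v}, anc u v → v ∈ A
  refl : ∀ v ∈ A, anc v v
  trans : ∀ {u v w}, anc u v → anc v w → anc u w
  antisymm : ∀ {u v}, anc u v → anc v u → u = v
  chain : ∀ {u w v}, anc u v → anc w v → anc u w ∨ anc w u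

/-- Depth of a rooted forest: the maximum number of vertices on a root-to-leaf path,
i.e. the maximum number of ancestors of a vertex. -/
noncomputable def RootedForest.depth [Fintype V] {A : Set V} (F : RootedForest V A) : ℕ :=
  Finset.univ.sup fun v : V => {u | F.anc u v}.ncard

/-- `F` is a treedepth decomposition of `G[A]`: the endpoints of every edge of `G[A]`
are in ancestor-descendant relation in `F`. -/
def IsTDDecompOn (G : SimpleGraph V) (A : Set V) (F : RootedForest V A) : Prop :=
  ∀ u v, u ∈ A → v ∈ A → G.Adj u v → F.anc u v ∨ F.anc v u

/-- `A` is an `(x,y)`-vertex cut in `G`: `A` avoids `x` and `y` and there is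
no path from `x` to `y` in `G − A`. -/
def IsVertexCut (G : SimpleGraph V) (x y : V) (A : Set V) : Prop :=
  ∃ (hx : x ∈ Aᶜ) (hy : y ∈ Aᶜ), ¬ (G.induce Aᶜ).Reachable ⟨x, hx⟩ ⟨y, hy⟩

/-- The weight of a subgraph: the sum of the weights of its edges. -/
noncomputable def subWeight (w : Sym2 V → ℕ) {G : SimpleGraph V} (T : G.Subgraph) : ℕ :=
  ∑ᶠ e ∈ T.edgeSet, w e

/-- The leaves (vertices with exactly one neighbor) of a subgraph. -/
def subLeaves {G : SimpleGraph V} (T : G.Subgraph) : Set V :=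
  {v | (T.neighborSet v).ncard = 1}

/-- `T` is a Steiner tree for the terminal set `R` in `G`. -/
def IsSteinerTree (G : SimpleGraph V) (R : Set V) (T : G.Subgraph) : Prop :=
  T.coe.IsTree ∧ R ⊆ T.verts

/-- `T` is a `t`-component for `R`: a tree with at most `t` leaves, all of which lie in `R`. -/
def IsTComponent (G : SimpleGraph V) (R : Set V) (t : ℕ) (T : G.Subgraph) : Prop :=
  T.coe.IsTree ∧ (subLeaves T).ncard ≤ t ∧ subLeaves T ⊆ R

/-!
Process `T` bottom-up from a root, with `k = ⌊log₂ t⌋`. A partial solution for a subtree consists of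
finished components and one open component hanging from the root. When two subtrees are glued at a
non-terminal root, their open components are united, which doubles the number `2 ^ j` of leaves;
once it reaches `2 ^ k ≤ t` the open component is closed, and a path from the root to some terminal
starts a new one. Instead of choosing where to close, one maintains `k` partial solutions, with
`2 ^ 0, …, 2 ^ (k - 1)` leaves, which each gluing permutes cyclically, so that only one of them pays
for a new path. Each subtree also holds one path in reserve; a gluing spends one of the two reserved
paths and keeps the other. Hence the `k` partial solutions and the reserved path together weigh at
most `(k + 1) · w(T)`, and at a terminal root the cheapest partial solution, closed there, weighs at
most `(1 + 1/k) · w(T)`.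
-/

section BorchersDu

variable {G : SimpleGraph V} {w : Sym2 V → ℕ} {R : Set V}

/-! ### Weights and leaves of subgraphs -/

lemma subWeight_singletonSubgraph (w : Sym2 V → ℕ) (v : V) :
    subWeight w (G.singletonSubgraph v) = 0 := by
  rw [subWeight, edgeSet_singletonSubgraph, finsum_mem_empty]

lemma subWeight_subgraphOfAdj (w : Sym2 V → ℕ) {u v : V} (h : G.Adj u v) :
    subWeight w (G.subgraphOfAdj h) = w s(u, v) := by
  rw [subWeight, edgeSet_subgraphOfAdj, finsum_mem_singleton]

lemma subWeight_sup_le {A B : G.Subgraph} (hA : A.edgeSet.Finite) (hB : B.edgeSet.Finite) :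
    subWeight w (A ⊔ B) ≤ subWeight w A + subWeight w B := by
  simp only [subWeight, Subgraph.edgeSet_sup]
  rw [← finsum_mem_union_inter hA hB]
  exact Nat.le_add_right _ _

lemma subWeight_mono {A B : G.Subgraph} (hB : B.edgeSet.Finite) (h : A ≤ B) :
    subWeight w A ≤ subWeight w B := by
  rw [subWeight, subWeight, ← Set.union_sdiff_cancel (Subgraph.edgeSet_mono h),
    finsum_mem_union disjoint_sdiff_right (hB.subset (Subgraph.edgeSet_mono h)) hB.sdiff]
  exact Nat.le_add_right _ _

lemma disjoint_edgeSet_of_subsingleton_inter_verts {A B : G.Subgraph}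
    (h : (A.verts ∩ B.verts).Subsingleton) : Disjoint A.edgeSet B.edgeSet := by
  rw [Set.disjoint_left]
  rintro ⟨x, y⟩ (hA : A.Adj x y) (hB : B.Adj x y)
  exact hA.ne (h ⟨hA.fst_mem, hB.fst_mem⟩ ⟨hA.snd_mem, hB.snd_mem⟩)

lemma subWeight_sup_of_subsingleton_inter_verts {A B : G.Subgraph} (hA : A.edgeSet.Finite)
    (hB : B.edgeSet.Finite) (h : (A.verts ∩ B.verts).Subsingleton) :
    subWeight w (A ⊔ B) = subWeight w A + subWeight w B := by
  rw [subWeight, Subgraph.edgeSet_sup,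
    finsum_mem_union (disjoint_edgeSet_of_subsingleton_inter_verts h) hA hB, subWeight, subWeight]

lemma subWeight_sup_subgraphOfAdj {T : G.Subgraph} {v a : V} (hfin : T.edgeSet.Finite)
    (hv : v ∉ T.verts) (hva : G.Adj v a) :
    subWeight w (T ⊔ G.subgraphOfAdj hva) = subWeight w T + w s(v, a) := by
  rw [subWeight_sup_of_subsingleton_inter_verts hfin (by simp), subWeight_subgraphOfAdj]
  refine Set.subsingleton_singleton (a := a) |>.anti ?_
  rintro x ⟨hx, rfl | rfl⟩
  · exact absurd hx hv
  · rfl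

lemma mem_subLeaves_iff_existsUnique {A : G.Subgraph} {x : V} :
    x ∈ subLeaves A ↔ ∃! y, A.Adj x y := by
  simp only [subLeaves, Set.mem_ofPred_eq, Set.ncard_eq_one, Set.eq_singleton_iff_unique_mem,
    Subgraph.mem_neighborSet, ExistsUnique]

lemma subLeaves_subset_verts (A : G.Subgraph) : subLeaves A ⊆ A.verts := by
  intro x hx
  obtain ⟨y, hxy, -⟩ := mem_subLeaves_iff_existsUnique.1 hx
  exact hxy.fst_mem

lemma subLeaves_singletonSubgraph (v : V) : subLeaves (G.singletonSubgraph v) = ∅ := by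
  ext x
  simp [mem_subLeaves_iff_existsUnique]

lemma subLeaves_sup_subset (A B : G.Subgraph) :
    subLeaves (A ⊔ B) ⊆ subLeaves A ∪ subLeaves B := by
  intro x hx
  simp only [Set.mem_union, mem_subLeaves_iff_existsUnique, Subgraph.sup_adj] at hx ⊢
  obtain ⟨y, hA | hB, huniq⟩ := hx
  · exact Or.inl ⟨y, hA, fun z hz => huniq z (Or.inl hz)⟩
  · exact Or.inr ⟨y, hB, fun z hz => huniq z (Or.inr hz)⟩

lemma notMem_subLeaves_sup {A B : G.Subgraph} {x y z : V} (hA : A.Adj x y) (hB : B.Adj x z)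
    (hyz : y ≠ z) : x ∉ subLeaves (A ⊔ B) := by
  rw [mem_subLeaves_iff_existsUnique]
  exact fun h => hyz (h.unique (Or.inl hA) (Or.inr hB))

/-! ### Rooted trees -/

/-- `IsRootedTree T v`: the subgraph `T` is a finite tree containing the root `v`, presented by the
three operations along which a solution is assembled bottom-up: a single vertex, planting a tree on
a new root, and gluing two trees at a common root. -/
inductive IsRootedTree : G.Subgraph → V → Prop
  | single (v : V) : IsRootedTree (G.singletonSubgraph v) v
  | plant {T : G.Subgraph} {a v : V} (h : IsRootedTree T a) (hva : G.Adj v a)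
      (hv : v ∉ T.verts) : IsRootedTree (T ⊔ G.subgraphOfAdj hva) v
  | glue {T₁ T₂ : G.Subgraph} {v : V} (h₁ : IsRootedTree T₁ v) (h₂ : IsRootedTree T₂ v)
      (hd : T₁.verts ∩ T₂.verts ⊆ {v}) : IsRootedTree (T₁ ⊔ T₂) v

namespace IsRootedTree

lemma root_mem {T : G.Subgraph} {v : V} (h : IsRootedTree T v) : v ∈ T.verts := by
  induction h with
  | single => rfl
  | plant => exact Or.inr (Or.inl rfl)
  | glue _ _ _ ih₁ => exact Or.inl ih₁

lemma finite_edgeSet {T : G.Subgraph} {v : V} (h : IsRootedTree T v) : T.edgeSet.Finite := by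
  induction h with
  | single => simp
  | plant _ _ _ ih => simpa using ih
  | glue _ _ _ ih₁ ih₂ => simpa using ih₁.union ih₂

lemma subgraphOfAdj {u x : V} (hux : G.Adj u x) : IsRootedTree (G.subgraphOfAdj hux) u := by
  have h := (single x).plant hux (by simpa using hux.ne)
  rwa [sup_eq_right.2 ((singletonSubgraph_le_iff x _).2 (by simp))] at h

lemma attach_root {T : G.Subgraph} {v x : V} (h : IsRootedTree T v) (hx : x ∉ T.verts)
    (hvx : G.Adj v x) : IsRootedTree (T ⊔ G.subgraphOfAdj hvx) v := by
  refine h.glue (subgraphOfAdj hvx) ?_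
  rintro y ⟨hy, rfl | rfl⟩
  · rfl
  · exact absurd hy hx

lemma attach {T : G.Subgraph} {v u x : V} (h : IsRootedTree T v) (hu : u ∈ T.verts)
    (hx : x ∉ T.verts) (hux : G.Adj u x) : IsRootedTree (T ⊔ G.subgraphOfAdj hux) v := by
  induction h with
  | single v =>
    obtain rfl : u = v := hu
    exact (single u).attach_root hx hux
  | @plant T a v h hva hv ih =>
    by_cases huT : u ∈ T.verts
    · rw [sup_right_comm]
      refine (ih huT fun hxT => hx (Or.inl hxT)).plant hva ?_
      rintro (hvT | rfl | rfl)
      · exact hv hvT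
      · exact hv huT
      · exact hx (Or.inr (Or.inl rfl))
    · rcases hu with hu | rfl | rfl
      · exact absurd hu huT
      · exact (h.plant hva hv).attach_root hx hux
      · exact absurd h.root_mem huT
  | glue h₁ h₂ hd ih₁ ih₂ =>
    have hx₁ := fun h => hx (Or.inl h)
    have hx₂ := fun h => hx (Or.inr h)
    rcases hu with hu | hu
    · rw [sup_right_comm]
      refine (ih₁ hu hx₁).glue h₂ ?_
      rintro y ⟨hy | rfl | rfl, hy₂⟩
      · exact hd ⟨hy, hy₂⟩
      · exact hd ⟨hu, hy₂⟩
      · exact absurd hy₂ hx₂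
    · rw [sup_assoc]
      refine h₁.glue (ih₂ hu hx₂) ?_
      rintro y ⟨hy₁, hy | rfl | rfl⟩
      · exact hd ⟨hy₁, hy⟩
      · exact hd ⟨hy₁, hu⟩
      · exact absurd hy₁ hx₁

end IsRootedTree

lemma exists_isRootedTree_le_verts_eq {T : G.Subgraph} (hT : T.Connected)
    (hfin : T.verts.Finite) {v : V} (hv : v ∈ T.verts) :
    ∃ T' ≤ T, T'.verts = T.verts ∧ IsRootedTree T' v := by
  obtain ⟨M, ⟨hMT, hM⟩, hmax⟩ := Set.Finite.exists_maximalFor' Subgraph.verts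
    {T' : G.Subgraph | T' ≤ T ∧ IsRootedTree T' v}
    (hfin.finite_subsets.subset (Set.image_subset_iff.2 fun _ h => h.1.1))
    ⟨_, (singletonSubgraph_le_iff v T).2 hv, .single v⟩
  refine ⟨M, hMT, hMT.1.antisymm fun x hxT => ?_, hM⟩
  by_contra hxM
  obtain ⟨p⟩ := hT.coe.preconnected ⟨v, hv⟩ ⟨x, hxT⟩
  obtain ⟨⟨⟨y, z⟩, hyz : T.Adj y z⟩, -, hy, hz⟩ :=
    p.exists_boundary_dart {u : T.verts | (u : V) ∈ M.verts} hM.root_mem hxM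
  have grown_le : M ⊔ G.subgraphOfAdj hyz.adj_sub ≤ T :=
    sup_le hMT (subgraphOfAdj_le_of_adj T hyz)
  exact hz (hmax ⟨grown_le, hM.attach hy hz hyz.adj_sub⟩ (Subgraph.verts_mono le_sup_left)
    (by simp))

/-! ### Components of a restricted Steiner tree -/

/-- The requirements of `IsTComponent` with connectedness in place of being a tree; inside a tree
the two agree, and connectedness is easier to maintain under unions. -/
structure IsClosedComponent (R : Set V) (t : ℕ) (B : G.Subgraph) : Prop where
  connected : B.Connected
  ncard_subLeaves_le : (subLeaves B).ncard ≤ t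
  subLeaves_subset : subLeaves B ⊆ R

/-- An unfinished component `C` hanging from the vertex `v`. The set `A` consists of at most `n`
terminals, among them all leaves of `C` other than `v`. If `C` is the single vertex `v`, which has
no leaves at all, then `v` must be counted in `A`, as it becomes a leaf once `C` is extended. -/
structure IsOpenComponent (R : Set V) (n : ℕ) (v : V) (C : G.Subgraph) : Prop where
  connected : C.Connected
  mem : v ∈ C.verts
  exists_leaves : ∃ A : Finset V, ↑A ⊆ R ∧ A.card ≤ n ∧ (v ∈ A ∨ ∃ u, C.Adj v u) ∧
    subLeaves C ⊆ insert v ↑A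

lemma isClosedComponent_of_subLeaves_subset {t : ℕ} {B : G.Subgraph} (hB : B.Connected)
    {A : Finset V} (hAR : ↑A ⊆ R) (hAt : A.card ≤ t) (hBA : subLeaves B ⊆ A) :
    IsClosedComponent R t B where
  connected := hB
  ncard_subLeaves_le := by
    refine (Set.ncard_le_ncard hBA A.finite_toSet).trans ?_
    rwa [Set.ncard_coe_finset]
  subLeaves_subset := hBA.trans hAR

lemma isClosedComponent_singletonSubgraph (t : ℕ) (v : V) :
    IsClosedComponent R t (G.singletonSubgraph v) :=
  isClosedComponent_of_subLeaves_subset (A := ∅) Subgraph.singletonSubgraph_connected (by simp)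
    (by simp) (by simp [subLeaves_singletonSubgraph])

lemma coe_isTree_of_le {T B : G.Subgraph} (hT : T.coe.IsTree) (hB : B.Connected) (h : B ≤ T) :
    B.coe.IsTree :=
  ⟨hB.coe, hT.isAcyclic.comap (Subgraph.inclusion h) (Subgraph.inclusion.injective h)⟩

lemma IsClosedComponent.isTComponent {t : ℕ} {T B : G.Subgraph} (h : IsClosedComponent R t B)
    (hT : T.coe.IsTree) (hBT : B ≤ T) : IsTComponent G R t B :=
  ⟨coe_isTree_of_le hT h.connected hBT, h.ncard_subLeaves_le, h.subLeaves_subset⟩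

lemma connected_sup_of_mem {A B : G.Subgraph} {v : V} (hA : A.Connected) (hB : B.Connected)
    (hvA : v ∈ A.verts) (hvB : v ∈ B.verts) : (A ⊔ B).Connected :=
  Subgraph.connected_sup hA.preconnected hB.preconnected ⟨v, hvA, hvB⟩

namespace IsOpenComponent

lemma singletonSubgraph {n : ℕ} {v : V} (hn : 1 ≤ n) (hv : v ∈ R) :
    IsOpenComponent R n v (G.singletonSubgraph v) where
  connected := Subgraph.singletonSubgraph_connected
  mem := rfl
  exists_leaves := ⟨{v}, by simpa using hv, by simpa using hn, by simp,
    by simp [subLeaves_singletonSubgraph]⟩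

lemma plant {n : ℕ} {a v : V} {C : G.Subgraph} (h : IsOpenComponent R n a C) (hv : v ∉ C.verts)
    (hva : G.Adj v a) : IsOpenComponent R n v (C ⊔ G.subgraphOfAdj hva) := by
  obtain ⟨hC, haC, A, hAR, hAn, ha, hleaf⟩ := h
  have a_leaf : a ∈ subLeaves (C ⊔ G.subgraphOfAdj hva) → a ∈ A := by
    rintro ha'
    refine ha.resolve_right ?_
    rintro ⟨u, hau⟩
    exact notMem_subLeaves_sup hau (z := v) (by simp) (fun h => hv (h ▸ hau.snd_mem)) ha'
  refine ⟨connected_sup_of_mem hC (Subgraph.subgraphOfAdj_connected hva) haC (by simp), by simp,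
    A, hAR, hAn, Or.inr ⟨a, by simp⟩, fun x hx => ?_⟩
  rcases subLeaves_sup_subset _ _ hx with hxC | hxe
  · rcases hleaf hxC with rfl | hxA
    · exact Or.inr (a_leaf hx)
    · exact Or.inr hxA
  · rcases subLeaves_subset_verts _ hxe with rfl | rfl
    · exact Or.inl rfl
    · exact Or.inr (a_leaf hx)

lemma sup {n m : ℕ} {v : V} {C₁ C₂ : G.Subgraph} (h₁ : IsOpenComponent R n v C₁)
    (h₂ : IsOpenComponent R m v C₂) : IsOpenComponent R (n + m) v (C₁ ⊔ C₂) := by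
  classical
  obtain ⟨hC₁, hv₁, A₁, hAR₁, hAn₁, hA₁, hleaf₁⟩ := h₁
  obtain ⟨hC₂, hv₂, A₂, hAR₂, hAm₂, -, hleaf₂⟩ := h₂
  refine ⟨connected_sup_of_mem hC₁ hC₂ hv₁ hv₂, Or.inl hv₁, A₁ ∪ A₂, ?_,
    (Finset.card_union_le _ _).trans (Nat.add_le_add hAn₁ hAm₂), ?_, ?_⟩
  · simpa using ⟨hAR₁, hAR₂⟩
  · exact hA₁.imp (Finset.mem_union_left _) fun ⟨u, hu⟩ => ⟨u, Or.inl hu⟩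
  · rw [Finset.coe_union, Set.insert_union_distrib]
    exact (subLeaves_sup_subset _ _).trans (Set.union_subset_union hleaf₁ hleaf₂)

lemma exists_adj_of_notMem {n : ℕ} {v : V} {C : G.Subgraph} (h : IsOpenComponent R n v C)
    (hv : v ∉ R) : ∃ u, C.Adj v u := by
  obtain ⟨A, hAR, -, hA, -⟩ := h.exists_leaves
  exact hA.resolve_left fun hvA => hv (hAR hvA)

lemma isClosedComponent_sup {n m t : ℕ} {v : V} {C₁ C₂ : G.Subgraph}
    (h₁ : IsOpenComponent R n v C₁) (h₂ : IsOpenComponent R m v C₂) (hv : v ∉ R)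
    (hd : C₁.verts ∩ C₂.verts ⊆ {v}) (ht : n + m ≤ t) : IsClosedComponent R t (C₁ ⊔ C₂) := by
  obtain ⟨hC, -, A, hAR, hAn, -, hleaf⟩ := h₁.sup h₂
  obtain ⟨u₁, hu₁⟩ := h₁.exists_adj_of_notMem hv
  obtain ⟨u₂, hu₂⟩ := h₂.exists_adj_of_notMem hv
  have hne : u₁ ≠ u₂ := by
    rintro rfl
    exact hu₁.ne (hd ⟨hu₁.snd_mem, hu₂.snd_mem⟩).symm
  refine isClosedComponent_of_subLeaves_subset hC hAR (hAn.trans ht) fun x hx => ?_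
  refine (hleaf hx).resolve_left ?_
  rintro rfl
  exact notMem_subLeaves_sup hu₁ hu₂ hne hx

lemma isClosedComponent {n t : ℕ} {v : V} {C : G.Subgraph} (h : IsOpenComponent R n v C)
    (hv : v ∈ R) (ht : n + 1 ≤ t) : IsClosedComponent R t C := by
  classical
  obtain ⟨hC, -, A, hAR, hAn, -, hleaf⟩ := h
  refine isClosedComponent_of_subLeaves_subset (A := insert v A) hC ?_
    ((Finset.card_insert_le v A).trans (by omega)) (by simpa using hleaf)
  simpa using Set.insert_subset hv hAR

end IsOpenComponent

/-! ### Solutions and partial solutions -/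

/-- `H` is a connected subgraph of `T` through all terminals of `T`. -/
structure IsSteinerSubgraph (R : Set V) (T H : G.Subgraph) : Prop where
  le : H ≤ T
  connected : H.Connected
  terminals_subset : R ∩ T.verts ⊆ H.verts

namespace IsSteinerSubgraph

lemma refl {T : G.Subgraph} (hT : T.Connected) : IsSteinerSubgraph R T T :=
  ⟨le_rfl, hT, Set.inter_subset_right⟩

lemma mono {T T' H : G.Subgraph} (h : IsSteinerSubgraph R T H) (hT : T ≤ T')
    (hR : R ∩ T'.verts ⊆ T.verts) : IsSteinerSubgraph R T' H :=
  ⟨h.le.trans hT, h.connected,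
    (Set.subset_inter Set.inter_subset_left hR).trans h.terminals_subset⟩

lemma sup {T₁ T₂ H₁ H₂ : G.Subgraph} {v : V} (h₁ : IsSteinerSubgraph R T₁ H₁)
    (h₂ : IsSteinerSubgraph R T₂ H₂) (hv₁ : v ∈ H₁.verts) (hv₂ : v ∈ H₂.verts) :
    IsSteinerSubgraph R (T₁ ⊔ T₂) (H₁ ⊔ H₂) where
  le := sup_le_sup h₁.le h₂.le
  connected := connected_sup_of_mem h₁.connected h₂.connected hv₁ hv₂
  terminals_subset := by
    rw [Subgraph.verts_sup, Set.inter_union_distrib_left]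
    exact Set.union_subset_union h₁.terminals_subset h₂.terminals_subset

lemma sup_of_le {T H C : G.Subgraph} {v : V} (h : IsSteinerSubgraph R T H) (hCT : C ≤ T)
    (hC : C.Connected) (hvC : v ∈ C.verts) (hvH : v ∈ H.verts) :
    IsSteinerSubgraph R T (C ⊔ H) := by
  simpa only [sup_eq_right.2 hCT] using (refl hC).sup h hvC hvH

end IsSteinerSubgraph

/-- The total weight of a family of subgraphs, counted with multiplicity. -/
noncomputable def familyWeight (w : Sym2 V → ℕ) (L : Multiset G.Subgraph) : ℕ :=
  (L.map (subWeight w)).sum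

lemma familyWeight_cons (w : Sym2 V → ℕ) (C : G.Subgraph) (L : Multiset G.Subgraph) :
    familyWeight w (C ::ₘ L) = subWeight w C + familyWeight w L := by
  simp [familyWeight]

lemma familyWeight_add (w : Sym2 V → ℕ) (L₁ L₂ : Multiset G.Subgraph) :
    familyWeight w (L₁ + L₂) = familyWeight w L₁ + familyWeight w L₂ := by
  simp [familyWeight]

/-- A family `L` of closed components whose union connects all terminals of `T` inside `T`. -/
structure IsSolution (R : Set V) (t : ℕ) (T : G.Subgraph) (L : Multiset G.Subgraph) : Prop where
  isClosed : ∀ B ∈ L, IsClosedComponent R t B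
  isSteiner : IsSteinerSubgraph R T L.sup

/-- An open component `C` with at most `n` leaves hanging from the root `v` of `T`, together with a
family `L` of closed components, which jointly connect all terminals of `T` inside `T`. -/
structure IsPartialSolution (R : Set V) (t n : ℕ) (T : G.Subgraph) (v : V) (C : G.Subgraph)
    (L : Multiset G.Subgraph) : Prop where
  isOpen : IsOpenComponent R n v C
  isClosed : ∀ B ∈ L, IsClosedComponent R t B
  isSteiner : IsSteinerSubgraph R T (C ::ₘ L).sup

namespace IsSolution

lemma singletonSubgraph (t : ℕ) (v : V) :
    IsSolution R t (G.singletonSubgraph v) {G.singletonSubgraph v} where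
  isClosed B hB := Multiset.mem_singleton.1 hB ▸ isClosedComponent_singletonSubgraph t v
  isSteiner := by
    simpa only [Multiset.sup_singleton] using
      IsSteinerSubgraph.refl Subgraph.singletonSubgraph_connected

lemma add {t : ℕ} {T₁ T₂ : G.Subgraph} {v : V} {L₁ L₂ : Multiset G.Subgraph}
    (h₁ : IsSolution R t T₁ L₁) (h₂ : IsSolution R t T₂ L₂) (hv : v ∈ R) (hv₁ : v ∈ T₁.verts)
    (hv₂ : v ∈ T₂.verts) : IsSolution R t (T₁ ⊔ T₂) (L₁ + L₂) where
  isClosed B hB := (Multiset.mem_add.1 hB).elim (h₁.isClosed B) (h₂.isClosed B)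
  isSteiner := by
    rw [Multiset.sup_add]
    exact h₁.isSteiner.sup h₂.isSteiner (h₁.isSteiner.terminals_subset ⟨hv, hv₁⟩)
      (h₂.isSteiner.terminals_subset ⟨hv, hv₂⟩)

lemma isPartialSolution {t n : ℕ} {T : G.Subgraph} {v : V} {L : Multiset G.Subgraph}
    (h : IsSolution R t T L) (hn : 1 ≤ n) (hv : v ∈ R) (hvT : v ∈ T.verts) :
    IsPartialSolution R t n T v (G.singletonSubgraph v) L where
  isOpen := .singletonSubgraph hn hv
  isClosed := h.isClosed
  isSteiner := by
    rw [Multiset.sup_cons]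
    exact h.isSteiner.sup_of_le ((singletonSubgraph_le_iff v T).2 hvT)
      Subgraph.singletonSubgraph_connected rfl (h.isSteiner.terminals_subset ⟨hv, hvT⟩)

end IsSolution

namespace IsPartialSolution

lemma open_le {t n : ℕ} {T C : G.Subgraph} {v : V} {L : Multiset G.Subgraph}
    (h : IsPartialSolution R t n T v C L) : C ≤ T :=
  (Multiset.le_sup (Multiset.mem_cons_self C L)).trans h.isSteiner.le

lemma root_mem_sup {t n : ℕ} {T C : G.Subgraph} {v : V} {L : Multiset G.Subgraph}
    (h : IsPartialSolution R t n T v C L) : v ∈ (C ::ₘ L).sup.verts :=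
  (Multiset.le_sup (Multiset.mem_cons_self C L)).1 h.isOpen.mem

lemma mono {t n : ℕ} {T T' C : G.Subgraph} {v : V} {L : Multiset G.Subgraph}
    (h : IsPartialSolution R t n T v C L) (hT : T ≤ T') (hR : R ∩ T'.verts ⊆ T.verts) :
    IsPartialSolution R t n T' v C L :=
  ⟨h.isOpen, h.isClosed, h.isSteiner.mono hT hR⟩

lemma isSolution {t n : ℕ} {T C : G.Subgraph} {v : V} {L : Multiset G.Subgraph}
    (h : IsPartialSolution R t n T v C L) (hC : IsClosedComponent R t C) :
    IsSolution R t T (C ::ₘ L) :=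
  ⟨Multiset.forall_mem_cons.2 ⟨hC, h.isClosed⟩, h.isSteiner⟩

lemma plant {t n : ℕ} {T C : G.Subgraph} {a v : V} {L : Multiset G.Subgraph}
    (h : IsPartialSolution R t n T a C L) (hv : v ∉ T.verts) (hva : G.Adj v a) :
    IsPartialSolution R t n (T ⊔ G.subgraphOfAdj hva) v (C ⊔ G.subgraphOfAdj hva) L where
  isOpen := h.isOpen.plant (fun hvC => hv (h.open_le.1 hvC)) hva
  isClosed := h.isClosed
  isSteiner := by
    have hsup : ((C ⊔ G.subgraphOfAdj hva) ::ₘ L).sup = (C ::ₘ L).sup ⊔ G.subgraphOfAdj hva := by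
      simp only [Multiset.sup_cons, sup_right_comm]
    rw [hsup]
    exact h.isSteiner.sup (.refl (Subgraph.subgraphOfAdj_connected hva)) h.root_mem_sup (by simp)

lemma glue {t n m : ℕ} {T₁ T₂ C₁ C₂ : G.Subgraph} {v : V} {L₁ L₂ : Multiset G.Subgraph}
    (h₁ : IsPartialSolution R t n T₁ v C₁ L₁) (h₂ : IsPartialSolution R t m T₂ v C₂ L₂) :
    IsPartialSolution R t (n + m) (T₁ ⊔ T₂) v (C₁ ⊔ C₂) (L₁ + L₂) where
  isOpen := h₁.isOpen.sup h₂.isOpen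
  isClosed B hB := (Multiset.mem_add.1 hB).elim (h₁.isClosed B) (h₂.isClosed B)
  isSteiner := by
    have hsup : ((C₁ ⊔ C₂) ::ₘ (L₁ + L₂)).sup = (C₁ ::ₘ L₁).sup ⊔ (C₂ ::ₘ L₂).sup := by
      simp only [Multiset.sup_cons, Multiset.sup_add, sup_sup_sup_comm]
    rw [hsup]
    exact h₁.isSteiner.sup h₂.isSteiner h₁.root_mem_sup h₂.root_mem_sup

lemma familyWeight_glue_le {t n m : ℕ} {T₁ T₂ C₁ C₂ : G.Subgraph} {v : V}
    {L₁ L₂ : Multiset G.Subgraph} (h₁ : IsPartialSolution R t n T₁ v C₁ L₁)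
    (h₂ : IsPartialSolution R t m T₂ v C₂ L₂) (hfin₁ : T₁.edgeSet.Finite)
    (hfin₂ : T₂.edgeSet.Finite) :
    familyWeight w ((C₁ ⊔ C₂) ::ₘ (L₁ + L₂)) ≤
      familyWeight w (C₁ ::ₘ L₁) + familyWeight w (C₂ ::ₘ L₂) := by
  have := subWeight_sup_le (w := w) (hfin₁.subset (Subgraph.edgeSet_mono h₁.open_le))
    (hfin₂.subset (Subgraph.edgeSet_mono h₂.open_le))
  simp only [familyWeight_cons, familyWeight_add]
  omega

lemma reopen {t n m : ℕ} {T C D : G.Subgraph} {v : V} {L : Multiset G.Subgraph}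
    (h : IsPartialSolution R t n T v C L) (hC : IsClosedComponent R t C)
    (hD : IsOpenComponent R m v D) (hDT : D ≤ T) :
    IsPartialSolution R t m T v D (C ::ₘ L) where
  isOpen := hD
  isClosed := (h.isSolution hC).isClosed
  isSteiner := by
    rw [Multiset.sup_cons]
    exact h.isSteiner.sup_of_le hDT hD.connected hD.mem h.root_mem_sup

end IsPartialSolution

/-! ### Balanced families -/

/-- `T` has a solution of weight at most `(1 + 1/k) · w(T)`. -/
def HasCheapSolution (w : Sym2 V → ℕ) (R : Set V) (t k : ℕ) (T : G.Subgraph) : Prop :=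
  ∃ L, IsSolution R t T L ∧ k * familyWeight w L ≤ (k + 1) * subWeight w T

/-- The induction hypothesis for the tree `T` with root `v`: for every `j < k` a partial solution
whose open component has at most `2 ^ j` leaves, and an open component `P` with at most one leaf
(a path from `v` to a terminal) serving as a fresh open component. The weights are bounded only on
average over `j`, and the bound leaves room to pay for `P` once. -/
def HasBalancedFamily (w : Sym2 V → ℕ) (R : Set V) (t k : ℕ) (T : G.Subgraph) (v : V) : Prop :=
  ∃ (C : ℕ → G.Subgraph) (L : ℕ → Multiset G.Subgraph) (P : G.Subgraph),
    (∀ j < k, IsPartialSolution R t (2 ^ j) T v (C j) (L j)) ∧ IsOpenComponent R 1 v P ∧ P ≤ T ∧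
    ∑ j ∈ Finset.range k, familyWeight w (C j ::ₘ L j) + subWeight w P ≤ (k + 1) * subWeight w T

namespace HasCheapSolution

lemma singletonSubgraph (t k : ℕ) (v : V) :
    HasCheapSolution w R t k (G.singletonSubgraph v) :=
  ⟨_, .singletonSubgraph t v, by simp [familyWeight, subWeight_singletonSubgraph]⟩

lemma mono {t k : ℕ} {T T' : G.Subgraph} (h : HasCheapSolution w R t k T)
    (hfin : T'.edgeSet.Finite) (hT : T ≤ T') (hR : R ∩ T'.verts ⊆ T.verts) :
    HasCheapSolution w R t k T' := by
  obtain ⟨L, hL, hcost⟩ := h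
  exact ⟨L, ⟨hL.isClosed, hL.isSteiner.mono hT hR⟩,
    hcost.trans (Nat.mul_le_mul_left _ (subWeight_mono hfin hT))⟩

lemma sup {t k : ℕ} {T₁ T₂ : G.Subgraph} {v : V} (h₁ : HasCheapSolution w R t k T₁)
    (h₂ : HasCheapSolution w R t k T₂) (hfin₁ : T₁.edgeSet.Finite) (hfin₂ : T₂.edgeSet.Finite)
    (hd : T₁.verts ∩ T₂.verts ⊆ {v}) (hv : v ∈ R) (hv₁ : v ∈ T₁.verts) (hv₂ : v ∈ T₂.verts) :
    HasCheapSolution w R t k (T₁ ⊔ T₂) := by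
  obtain ⟨L₁, hL₁, hcost₁⟩ := h₁
  obtain ⟨L₂, hL₂, hcost₂⟩ := h₂
  refine ⟨L₁ + L₂, hL₁.add hL₂ hv hv₁ hv₂, ?_⟩
  rw [familyWeight_add, subWeight_sup_of_subsingleton_inter_verts hfin₁ hfin₂
    (Set.subsingleton_singleton.anti hd), mul_add, mul_add]
  exact Nat.add_le_add hcost₁ hcost₂

lemma hasBalancedFamily {t k : ℕ} {T : G.Subgraph} {v : V} (h : HasCheapSolution w R t k T)
    (hv : v ∈ R) (hvT : v ∈ T.verts) : HasBalancedFamily w R t k T v := by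
  obtain ⟨L, hL, hcost⟩ := h
  refine ⟨fun _ => G.singletonSubgraph v, fun _ => L, G.singletonSubgraph v,
    fun j _ => hL.isPartialSolution Nat.one_le_two_pow hv hvT, .singletonSubgraph le_rfl hv,
    (singletonSubgraph_le_iff v T).2 hvT, ?_⟩
  simpa [familyWeight_cons, subWeight_singletonSubgraph] using hcost

end HasCheapSolution

namespace HasBalancedFamily

lemma mono {t k : ℕ} {T T' : G.Subgraph} {v : V} (h : HasBalancedFamily w R t k T v)
    (hfin : T'.edgeSet.Finite) (hT : T ≤ T') (hR : R ∩ T'.verts ⊆ T.verts) :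
    HasBalancedFamily w R t k T' v := by
  obtain ⟨C, L, P, hCL, hP, hPT, hcost⟩ := h
  exact ⟨C, L, P, fun j hj => (hCL j hj).mono hT hR, hP, hPT.trans hT,
    hcost.trans (Nat.mul_le_mul_left _ (subWeight_mono hfin hT))⟩

lemma hasCheapSolution {t k : ℕ} {T : G.Subgraph} {v : V} (h : HasBalancedFamily w R t k T v)
    (hk : 0 < k) (hkt : 2 ^ k ≤ t) (hv : v ∈ R) : HasCheapSolution w R t k T := by
  obtain ⟨C, L, P, hCL, -, -, hcost⟩ := h
  obtain ⟨j, hj, hjcost⟩ : ∃ j ∈ Finset.range k,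
      k * familyWeight w (C j ::ₘ L j) ≤ (k + 1) * subWeight w T := by
    refine Finset.exists_le_of_sum_le (Finset.nonempty_range_iff.2 hk.ne') ?_
    rw [← Finset.mul_sum, Finset.sum_const, Finset.card_range, smul_eq_mul]
    exact Nat.mul_le_mul_left k ((Nat.le_add_right _ _).trans hcost)
  have hjk : j < k := Finset.mem_range.1 hj
  have hleaves : 2 ^ j + 1 ≤ t := (Nat.pow_lt_pow_right one_lt_two hjk).trans_le hkt
  have hpart := hCL j hjk
  exact ⟨_, hpart.isSolution (hpart.isOpen.isClosedComponent hv hleaves), hjcost⟩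

lemma plant {t k : ℕ} {T : G.Subgraph} {a v : V} (h : HasBalancedFamily w R t k T a)
    (hfin : T.edgeSet.Finite) (hv : v ∉ T.verts) (hva : G.Adj v a) :
    HasBalancedFamily w R t k (T ⊔ G.subgraphOfAdj hva) v := by
  obtain ⟨C, L, P, hCL, hP, hPT, hcost⟩ := h
  have sup_edge_le : ∀ D ≤ T, subWeight w (D ⊔ G.subgraphOfAdj hva) ≤ subWeight w D + w s(v, a) :=
    fun D hDT => (subWeight_sup_subgraphOfAdj (hfin.subset (Subgraph.edgeSet_mono hDT))
      (fun hvD => hv (hDT.1 hvD)) hva).le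
  refine ⟨fun j => C j ⊔ G.subgraphOfAdj hva, L, P ⊔ G.subgraphOfAdj hva,
    fun j hj => (hCL j hj).plant hv hva, hP.plant (fun hvP => hv (hPT.1 hvP)) hva,
    sup_le_sup_right hPT _, ?_⟩
  have family_le : ∑ j ∈ Finset.range k, familyWeight w ((C j ⊔ G.subgraphOfAdj hva) ::ₘ L j) ≤
      ∑ j ∈ Finset.range k, familyWeight w (C j ::ₘ L j) + k * w s(v, a) := by
    calc _ ≤ ∑ j ∈ Finset.range k, (familyWeight w (C j ::ₘ L j) + w s(v, a)) := by
          refine Finset.sum_le_sum fun j hj => ?_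
          have := sup_edge_le (C j) (hCL j (Finset.mem_range.1 hj)).open_le
          simp only [familyWeight_cons]
          omega
      _ = _ := by simp [Finset.sum_add_distrib]
  rw [subWeight_sup_subgraphOfAdj hfin hv hva]
  linarith [sup_edge_le P hPT]

/-- The partial solution at the last index is closed off at `v` and reenters at index `0` with the
path of `T₂`; the path of `T₁` remains in reserve. -/
lemma glue {t k : ℕ} {T₁ T₂ : G.Subgraph} {v : V} (h₁ : HasBalancedFamily w R t k T₁ v)
    (h₂ : HasBalancedFamily w R t k T₂ v) (hfin₁ : T₁.edgeSet.Finite)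
    (hfin₂ : T₂.edgeSet.Finite) (hd : T₁.verts ∩ T₂.verts ⊆ {v}) (hk : 0 < k) (hkt : 2 ^ k ≤ t)
    (hv : v ∉ R) : HasBalancedFamily w R t k (T₁ ⊔ T₂) v := by
  obtain ⟨C₁, L₁, P₁, hCL₁, hP₁, hPT₁, hcost₁⟩ := h₁
  obtain ⟨C₂, L₂, P₂, hCL₂, hP₂, hPT₂, hcost₂⟩ := h₂
  obtain ⟨l, rfl⟩ := Nat.exists_eq_succ_of_ne_zero hk.ne'
  let C := fun j => C₁ j ⊔ C₂ j
  let L := fun j => L₁ j + L₂ j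
  have glued : ∀ j < l + 1, IsPartialSolution R t (2 ^ (j + 1)) (T₁ ⊔ T₂) v (C j) (L j) := by
    intro j hj
    rw [pow_succ, mul_two]
    exact (hCL₁ j hj).glue (hCL₂ j hj)
  have closed : IsClosedComponent R t (C l) := by
    have h₁ := hCL₁ l l.lt_succ_self
    have h₂ := hCL₂ l l.lt_succ_self
    refine h₁.isOpen.isClosedComponent_sup h₂.isOpen hv
      ((Set.inter_subset_inter h₁.open_le.1 h₂.open_le.1).trans hd) ?_
    rwa [← mul_two, ← pow_succ]
  have glued_cost : ∑ j ∈ Finset.range (l + 1), familyWeight w (C j ::ₘ L j) ≤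
      ∑ j ∈ Finset.range (l + 1), familyWeight w (C₁ j ::ₘ L₁ j) +
        ∑ j ∈ Finset.range (l + 1), familyWeight w (C₂ j ::ₘ L₂ j) := by
    rw [← Finset.sum_add_distrib]
    refine Finset.sum_le_sum fun j hj => ?_
    have hjl := Finset.mem_range.1 hj
    exact (hCL₁ j hjl).familyWeight_glue_le (hCL₂ j hjl) hfin₁ hfin₂
  refine ⟨fun | 0 => P₂ | j + 1 => C j, fun | 0 => C l ::ₘ L l | j + 1 => L j, P₁, ?_, hP₁,
    hPT₁.trans le_sup_left, ?_⟩
  · rintro (_ | j) hj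
    · exact (glued l l.lt_succ_self).reopen closed hP₂ (hPT₂.trans le_sup_right)
    · exact glued j (by omega)
  · rw [Finset.sum_range_succ', subWeight_sup_of_subsingleton_inter_verts hfin₁ hfin₂
      (Set.subsingleton_singleton.anti hd)]
    rw [Finset.sum_range_succ] at glued_cost
    simp only [familyWeight_cons w P₂]
    linarith

end HasBalancedFamily

lemma IsRootedTree.hasBalancedFamily {t k : ℕ} {T : G.Subgraph} {v : V} (h : IsRootedTree T v)
    (hk : 0 < k) (hkt : 2 ^ k ≤ t) (hR : (R ∩ T.verts).Nonempty) :
    HasBalancedFamily w R t k T v := by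
  induction h with
  | single v =>
    obtain ⟨_, hv, rfl⟩ := hR
    exact (HasCheapSolution.singletonSubgraph t k _).hasBalancedFamily hv rfl
  | @plant T a v h hva hv ih =>
    by_cases hRT : (R ∩ T.verts).Nonempty
    · exact (ih hRT).plant h.finite_edgeSet hv hva
    have only_root : R ∩ (T ⊔ G.subgraphOfAdj hva).verts ⊆ {v} := by
      rintro x ⟨hxR, hx | rfl | rfl⟩
      · exact absurd ⟨x, hxR, hx⟩ hRT
      · rfl
      · exact absurd ⟨_, hxR, h.root_mem⟩ hRT
    have hvR : v ∈ R := by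
      obtain ⟨x, hx⟩ := hR
      exact only_root hx ▸ hx.1
    have hroot := (h.plant hva hv).root_mem
    exact ((HasCheapSolution.singletonSubgraph t k v).mono (h.plant hva hv).finite_edgeSet
      ((singletonSubgraph_le_iff v _).2 hroot) only_root).hasBalancedFamily hvR hroot
  | @glue T₁ T₂ v h₁ h₂ hd ih₁ ih₂ =>
    have hfin := (h₁.glue h₂ hd).finite_edgeSet
    by_cases hR₁ : (R ∩ T₁.verts).Nonempty
    · by_cases hR₂ : (R ∩ T₂.verts).Nonempty
      · by_cases hv : v ∈ R
        · exact (((ih₁ hR₁).hasCheapSolution hk hkt hv).sup ((ih₂ hR₂).hasCheapSolution hk hkt hv)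
            h₁.finite_edgeSet h₂.finite_edgeSet hd hv h₁.root_mem h₂.root_mem).hasBalancedFamily
            hv (Or.inl h₁.root_mem)
        · exact (ih₁ hR₁).glue (ih₂ hR₂) h₁.finite_edgeSet h₂.finite_edgeSet hd hk hkt hv
      · refine (ih₁ hR₁).mono hfin le_sup_left ?_
        rintro x ⟨hxR, hx | hx⟩
        · exact hx
        · exact absurd ⟨x, hxR, hx⟩ hR₂
    · have hR₂ : R ∩ (T₁ ⊔ T₂).verts ⊆ T₂.verts := by
        rintro x ⟨hxR, hx | hx⟩
        · exact absurd ⟨x, hxR, hx⟩ hR₁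
        · exact hx
      obtain ⟨x, hx⟩ := hR
      exact (ih₂ ⟨x, hx.1, hR₂ hx⟩).mono hfin le_sup_right hR₂

theorem hasCheapSolution_of_connected {t k : ℕ} {T : G.Subgraph} (hT : T.Connected)
    (hfin : T.verts.Finite) (hk : 0 < k) (hkt : 2 ^ k ≤ t) : HasCheapSolution w R t k T := by
  have hfinE : T.edgeSet.Finite := by
    have := hfin.to_subtype
    rw [← Subgraph.image_coe_edgeSet_coe]
    exact (Set.toFinite _).image _
  rcases (R ∩ T.verts).eq_empty_or_nonempty with hR | ⟨r, hr⟩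
  · obtain ⟨v, hv⟩ := hT.nonempty
    exact (HasCheapSolution.singletonSubgraph t k v).mono hfinE
      ((singletonSubgraph_le_iff v T).2 hv) (by simp [hR])
  · obtain ⟨T', hle, hverts, hroot⟩ := exists_isRootedTree_le_verts_eq hT hfin hr.2
    exact ((hroot.hasBalancedFamily hk hkt ⟨r, hverts ▸ hr⟩).hasCheapSolution hk hkt hr.1).mono
      hfinE hle (hverts ▸ Set.inter_subset_right)

end BorchersDu

theorem stmt11_general {V : Type*} (G : SimpleGraph V) (w : Sym2 V → ℕ) (R : Set V)
    (T : G.Subgraph) (hfin : T.verts.Finite) (hT : IsSteinerTree G R T) (t : ℕ) (ht : 2 ≤ t) :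
    ∃ 𝒯 : Multiset G.Subgraph,
      (∀ B ∈ 𝒯, IsTComponent G R t B) ∧
      IsSteinerTree G R 𝒯.sup ∧
      ((𝒯.map (subWeight w)).sum : ℝ) ≤
        (1 + 1 / (Nat.log 2 t : ℝ)) * (subWeight w T : ℝ) := by
  obtain ⟨hTree, hRT⟩ := hT
  have hk : 0 < Nat.log 2 t := Nat.log_pos one_lt_two ht
  obtain ⟨L, ⟨hclosed, hle, hconn, hterm⟩, hcost⟩ : HasCheapSolution w R t (Nat.log 2 t) T :=
    hasCheapSolution_of_connected ⟨hTree.connected⟩ hfin hk (Nat.pow_log_le_self 2 (by omega))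
  refine ⟨L, fun B hB => (hclosed B hB).isTComponent hTree ((Multiset.le_sup hB).trans hle),
    ⟨coe_isTree_of_le hTree hconn hle, fun r hr => hterm ⟨hr, hRT hr⟩⟩, ?_⟩
  have hk' : (0 : ℝ) < Nat.log 2 t := by exact_mod_cast hk
  have hcost' : (Nat.log 2 t : ℝ) * familyWeight w L ≤ (Nat.log 2 t + 1) * subWeight w T := by
    exact_mod_cast hcost
  calc (familyWeight w L : ℝ) ≤ (Nat.log 2 t + 1) * subWeight w T / Nat.log 2 t :=
        (le_div_iff₀' hk').2 hcost'
    _ = (1 + 1 / Nat.log 2 t) * subWeight w T := by field_simp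

/-- Borchers–Du: for every Steiner tree `T` for the terminal set `R` in a
connected graph `G` with edge weights `w` and every `t ≥ 2`, there is a `t`-restricted
Steiner tree for `R` — a collection (with multiplicity) of `t`-components for `R` whose
union is a Steiner tree for `R` — of total cost at most `(1 + 1/⌊log₂ t⌋)·w(T)`. -/
theorem stmt11 {V : Type*} [Fintype V] (G : SimpleGraph V) (hconn : G.Connected)
    (w : Sym2 V → ℕ) (R : Set V) (T : G.Subgraph) (hT : IsSteinerTree G R T)
    (t : ℕ) (ht : 2 ≤ t) :
    ∃ 𝒯 : Multiset G.Subgraph,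
      (∀ B ∈ 𝒯, IsTComponent G R t B) ∧
      IsSteinerTree G R 𝒯.sup ∧
      ((𝒯.map (subWeight w)).sum : ℝ) ≤
        (1 + 1 / (Nat.log 2 t : ℝ)) * (subWeight w T : ℝ) :=
  stmt11_general G w R T T.verts.toFinite hT t ht
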